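/- Fix q > 0, a ∈ ℝ³ ∖ {0} and ι ∈ {+1, −1}. Let x : I → ℝ³ be a C¹ curve with x(t) ≠ 0 and ρ(x(t),a) > 1 for all t ∈ I, solving the gradient flow x′(t) = ∇_x S_ι(x(t),a). Then, setting v(t) := ∇_x S_ι(x(t),a), the pair (x,v) is a C¹ solution of the repulsive Kepler ODE dx/dt = v, dv/dt = (q/2)·x/|x|³, and its energy satisfies |v(t)|² + q/|x(t)| = |a|² for all t ∈ I. -/

import Mathlib

/-! Write `A = |a|`, `r = |x|`, `ρ = ρ(x,a)` and `w = √(1 − 1/ρ)`. Since `K'(s) = √(1 − 1/s)`, the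
gradient is an explicit combination of the vectors `x` and `a`,
`∇ₓ S_ι = ((ιw − 1)/2)·(A/r) x + ((ιw + 1)/2) a` (`gradient_Sgen`).
Because `|A x/r| = |a|`, the vectors `A x/r + a` and `A x/r − a` are orthogonal, and the energy
identity follows from `w² = 1 − 1/ρ` (`energy_gradField`).

Along the flow one finds `ρ' = ιwAρ/r`, so the factor `w` cancels from `w' = ρ'/(2wρ²)` and
`w' = ιA/(2ρr)`. Substituting this and `r' = x·v/r` into the derivative of the explicit gradient, the
coefficient of `a` vanishes and that of `x` collapses to `q/(2r³)`. -/

open scoped RealInnerProductSpace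

noncomputable section

/-- Euclidean three-space. -/
abbrev R3 : Type := EuclideanSpace ℝ (Fin 3)

/-- `ρ(x,a) = (|a|/(2q))(|x||a| + x·a)`. -/
def rhoF (q : ℝ) (x a : R3) : ℝ := ‖a‖ / (2 * q) * (‖x‖ * ‖a‖ + ⟪x, a⟫)

/-- `K(s) = √(s(s−1)) − ln(√s + √(s−1))`. -/
def KF (s : ℝ) : ℝ := Real.sqrt (s * (s - 1)) - Real.log (Real.sqrt s + Real.sqrt (s - 1))

/-- The generating function `S_ι(x,a) = ι·(q/|a|)·K(ρ(x,a)) − (|x||a| − x·a)/2`. -/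
def Sgen (q ι : ℝ) (x a : R3) : ℝ :=
  ι * (q / ‖a‖) * KF (rhoF q x a) - (‖x‖ * ‖a‖ - ⟪x, a⟫) / 2

/-- The closed form of `∇ₓ S_ι(x,a)`, valid where `x ≠ 0` and `ρ(x,a) > 1`. -/
def gradField (q ι : ℝ) (a x : R3) : R3 :=
  ((ι * √(1 - (rhoF q x a)⁻¹) - 1) / 2 * (‖a‖ / ‖x‖)) • x +
    ((ι * √(1 - (rhoF q x a)⁻¹) + 1) / 2) • a

theorem hasDerivAt_KF {s : ℝ} (hs : 1 < s) : HasDerivAt KF (√(1 - s⁻¹)) s := by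
  have h0 : 0 < s := by linarith
  have h1 : 0 < s - 1 := by linarith
  have e1 : HasDerivAt (fun s : ℝ => s - 1) 1 s := (hasDerivAt_id s).sub_const 1
  have e2 : HasDerivAt (fun s : ℝ => s * (s - 1)) (1 * (s - 1) + s * 1) s :=
    (hasDerivAt_id s).mul e1
  have p0 : 0 < √s := Real.sqrt_pos.2 h0
  have p1 : 0 < √(s - 1) := Real.sqrt_pos.2 h1
  have H := (e2.sqrt (by positivity)).sub
    ((((hasDerivAt_id s).sqrt h0.ne').add (e1.sqrt h1.ne')).log
      (show √s + √(s - 1) ≠ 0 by positivity))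
  have H' : HasDerivAt KF _ s := H
  convert H' using 1
  have hw : √(1 - s⁻¹) = √(s - 1) / √s := by
    rw [← Real.sqrt_div h1.le]; congr 1; field_simp
  rw [hw, Real.sqrt_mul h0.le]
  simp only [id, Pi.add_apply]
  have q0 : √s ^ 2 = s := Real.sq_sqrt h0.le
  have q1 : √(s - 1) ^ 2 = s - 1 := Real.sq_sqrt h1.le
  generalize √s = u at *
  generalize √(s - 1) = z at *
  subst q0
  field_simp
  linear_combination 2 * (z + u) * q1

theorem hasFDerivAt_norm_R3 {x : R3} (hx : x ≠ 0) :
    HasFDerivAt (fun y : R3 => ‖y‖) (‖x‖⁻¹ • innerSL ℝ x) x := by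
  have hn : ‖x‖ ≠ 0 := norm_ne_zero_iff.2 hx
  have h := ((hasStrictFDerivAt_norm_sq x).hasFDerivAt).sqrt (pow_ne_zero 2 hn)
  simp only [Real.sqrt_sq (norm_nonneg _)] at h
  refine h.congr_fderiv ?_
  ext y
  simp
  field_simp

theorem hasFDerivAt_inner_const (a x : R3) :
    HasFDerivAt (fun y : R3 => ⟪y, a⟫) (innerSL ℝ a) x := by
  have h := (innerSL ℝ a).hasFDerivAt (x := x)
  simpa [real_inner_comm] using h

theorem hasFDerivAt_rhoF (q : ℝ) (a : R3) {x : R3} (hx : x ≠ 0) :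
    HasFDerivAt (fun y => rhoF q y a)
      ((‖a‖ / (2 * q)) • (‖a‖ • (‖x‖⁻¹ • innerSL ℝ x) + innerSL ℝ a)) x :=
  (((hasFDerivAt_norm_R3 hx).mul_const ‖a‖).add (hasFDerivAt_inner_const a x)).const_mul _

theorem gradient_Sgen {q : ℝ} (hq : 0 < q) (ι : ℝ) {a x : R3} (ha : a ≠ 0) (hx : x ≠ 0)
    (hρ : 1 < rhoF q x a) :
    gradient (fun y => Sgen q ι y a) x = gradField q ι a x := by
  have hA : ‖a‖ ≠ 0 := norm_ne_zero_iff.2 ha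
  have hr : ‖x‖ ≠ 0 := norm_ne_zero_iff.2 hx
  apply HasGradientAt.gradient
  rw [hasGradientAt_iff_hasFDerivAt]
  have h1 := ((hasDerivAt_KF hρ).comp_hasFDerivAt x (hasFDerivAt_rhoF q a hx)).const_mul
    (ι * (q / ‖a‖))
  have h2 := (((hasFDerivAt_norm_R3 hx).mul_const ‖a‖).sub
    (hasFDerivAt_inner_const a x)).mul_const (2⁻¹ : ℝ)
  have h3 := h1.sub h2
  have h4 : HasFDerivAt (fun y => Sgen q ι y a) _ x := h3
  refine h4.congr_fderiv ?_
  ext y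
  simp [gradField]
  field_simp
  ring

/-- The energy identity for the closed form of the gradient. -/
theorem energy_gradField {q : ℝ} (hq : 0 < q) {ι : ℝ} (hι : ι ^ 2 = 1) {a x : R3} (ha : a ≠ 0)
    (hx : x ≠ 0) (hρ : 1 < rhoF q x a) :
    ‖gradField q ι a x‖ ^ 2 + q / ‖x‖ = ‖a‖ ^ 2 := by
  have hA : ‖a‖ ≠ 0 := norm_ne_zero_iff.2 ha
  have hr : ‖x‖ ≠ 0 := norm_ne_zero_iff.2 hx
  have hw : √(1 - (rhoF q x a)⁻¹) ^ 2 = 1 - (rhoF q x a)⁻¹ :=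
    Real.sq_sqrt (sub_nonneg.2 (inv_le_one_of_one_le₀ hρ.le))
  have hρ0 : rhoF q x a ≠ 0 := by linarith
  have hp : ‖x‖ * ‖a‖ + ⟪x, a⟫ ≠ 0 := by
    intro h; apply hρ0; simp [rhoF, h]
  rw [gradField, norm_add_sq_real, norm_smul, norm_smul, mul_pow, mul_pow, Real.norm_eq_abs,
    Real.norm_eq_abs, sq_abs, sq_abs, inner_smul_left, inner_smul_right]
  simp only [conj_trivial]
  generalize √(1 - (rhoF q x a)⁻¹) = w at *
  have hq' := hq.ne'
  rw [rhoF] at hw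
  generalize ⟪x, a⟫ = c at *
  generalize ‖x‖ = r at *
  generalize ‖a‖ = A at *
  have hw2 : w ^ 2 = 1 - 2 * q / (A * (r * A + c)) := by
    rw [hw]; field_simp
  have key : ((ι * w - 1) / 2 * (A / r)) ^ 2 * r ^ 2
      + 2 * ((ι * w - 1) / 2 * (A / r) * ((ι * w + 1) / 2 * c)) + ((ι * w + 1) / 2) ^ 2 * A ^ 2
      = (ι ^ 2 * w ^ 2 + 1) / 2 * A ^ 2 + (ι ^ 2 * w ^ 2 - 1) / 2 * (A / r) * c := by
    field_simp
    ring
  rw [key, hι, hw2, mul_comm r A]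
  rw [mul_comm r A] at hp
  field_simp
  ring

/-- The derivative of the closed form of the gradient along a curve with velocity equal to it. -/
theorem hasDerivWithinAt_gradField {q : ℝ} (hq : 0 < q) {ι : ℝ} (hι : ι ^ 2 = 1) {a : R3}
    (ha : a ≠ 0) {I : Set ℝ} {x : ℝ → R3} {t : ℝ} (hx0 : x t ≠ 0) (hρ : 1 < rhoF q (x t) a)
    (hx : HasDerivWithinAt x (gradField q ι a (x t)) I t) :
    HasDerivWithinAt (fun s => gradField q ι a (x s)) ((q / 2 / ‖x t‖ ^ 3) • x t) I t := by
  have hA : ‖a‖ ≠ 0 := norm_ne_zero_iff.2 ha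
  have hr : ‖x t‖ ≠ 0 := norm_ne_zero_iff.2 hx0
  have hρ0 : rhoF q (x t) a ≠ 0 := by linarith
  have hpos : 0 < 1 - (rhoF q (x t) a)⁻¹ := sub_pos.2 (inv_lt_one_of_one_lt₀ hρ)
  have hw : √(1 - (rhoF q (x t) a)⁻¹) ^ 2 = 1 - (rhoF q (x t) a)⁻¹ := Real.sq_sqrt hpos.le
  have hw0 : √(1 - (rhoF q (x t) a)⁻¹) ≠ 0 := (Real.sqrt_pos.2 hpos).ne'
  have hp : ‖x t‖ * ‖a‖ + ⟪x t, a⟫ ≠ 0 := by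
    intro h; apply hρ0; simp [rhoF, h]
  have hq' := hq.ne'
  have dr : HasDerivWithinAt (fun s => ‖x s‖)
      ((ι * √(1 - (rhoF q (x t) a)⁻¹) - 1) / 2 * ‖a‖ +
        (ι * √(1 - (rhoF q (x t) a)⁻¹) + 1) / 2 * (⟪x t, a⟫ / ‖x t‖)) I t := by
    have h := (hasFDerivAt_norm_R3 hx0).comp_hasDerivWithinAt t hx
    refine h.congr_deriv ?_
    simp [gradField, inner_add_right, inner_smul_right]
    field_simp
  have dρ : HasDerivWithinAt (fun s => rhoF q (x s) a)
      (ι * √(1 - (rhoF q (x t) a)⁻¹) * ‖a‖ * rhoF q (x t) a / ‖x t‖) I t := by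
    have h := (hasFDerivAt_rhoF q a hx0).comp_hasDerivWithinAt t hx
    refine h.congr_deriv ?_
    simp [gradField, inner_add_right, inner_smul_right]
    generalize √(1 - (rhoF q (x t) a)⁻¹) = w
    rw [rhoF, real_inner_comm (x t) a]
    field_simp
    ring
  have dw : HasDerivWithinAt (fun s => √(1 - (rhoF q (x s) a)⁻¹))
      (ι * ‖a‖ / (2 * rhoF q (x t) a * ‖x t‖)) I t := by
    refine (((dρ.fun_inv hρ0).const_sub 1).sqrt hpos.ne').congr_deriv ?_
    generalize √(1 - (rhoF q (x t) a)⁻¹) = w at *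
    field_simp
  have dιw : HasDerivWithinAt (fun s => ι * √(1 - (rhoF q (x s) a)⁻¹))
      (q / (‖x t‖ * (‖x t‖ * ‖a‖ + ⟪x t, a⟫))) I t := by
    refine (dw.const_mul ι).congr_deriv ?_
    rw [rhoF]
    field_simp
    rw [hι]
  have d1 := ((dιw.sub_const 1).div_const 2).mul ((hasDerivWithinAt_const t I ‖a‖).div dr hr)
  have d2 := (dιw.add_const 1).div_const 2
  have d := (d1.smul hx).add (d2.smul_const a)
  have d' : HasDerivWithinAt (fun s => gradField q ι a (x s)) _ I t := d
  refine d'.congr_deriv ?_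
  have hW : (ι * √(1 - (rhoF q (x t) a)⁻¹)) ^ 2 =
      1 - 2 * q / (‖a‖ * (‖x t‖ * ‖a‖ + ⟪x t, a⟫)) := by
    rw [mul_pow, hι, hw, rhoF]
    field_simp
  simp only [gradField, Pi.mul_apply, Pi.div_apply]
  generalize ι * √(1 - (rhoF q (x t) a)⁻¹) = W at *
  generalize ⟪x t, a⟫ = c at *
  generalize ‖x t‖ = r at *
  generalize ‖a‖ = A at *
  have hp' : A * r + c ≠ 0 := by rwa [mul_comm]
  -- Eliminating `q` in favour of `W = ιw` leaves rational identities in `W`, `A`, `r`, `x·a`.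
  have hqW : q = (1 - W ^ 2) * (A * (r * A + c)) / 2 := by
    rw [hW]
    field_simp
    ring
  clear * - hqW hp hp' hr hA
  subst hqW
  -- The two goals are the coefficients of `x t` and of `a`.
  match_scalars
  · field_simp
    ring
  · field_simp
    ring

/-- If a `C¹` curve `x` in the region `{x ≠ 0, ρ(x,a) > 1}` solves the gradient flow
`x' = ∇ₓ S_ι(x,a)`, then with `v(t) := ∇ₓ S_ι(x(t),a)` the pair `(x,v)` is a `C¹`
solution of the repulsive Kepler ODE `x' = v`, `v' = (q/2)·x/|x|³`, with energy
`|v(t)|² + q/|x(t)| = |a|²`. -/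
theorem generating_function_gradient_flow_is_kepler (q : ℝ) (hq : 0 < q)
    (ι : ℝ) (hι : ι = 1 ∨ ι = -1) (a : R3) (ha : a ≠ 0)
    (I : Set ℝ) (hI : Convex ℝ I) (x : ℝ → R3)
    (hx0 : ∀ t ∈ I, x t ≠ 0)
    (hρ : ∀ t ∈ I, 1 < rhoF q (x t) a)
    (hx : ∀ t ∈ I, HasDerivWithinAt x (gradient (fun y => Sgen q ι y a) (x t)) I t) :
    ∀ t ∈ I,
      HasDerivWithinAt x (gradient (fun y => Sgen q ι y a) (x t)) I t ∧
      HasDerivWithinAt (fun s => gradient (fun y => Sgen q ι y a) (x s))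
        ((q / 2 / ‖x t‖ ^ 3) • x t) I t ∧
      ‖gradient (fun y => Sgen q ι y a) (x t)‖ ^ 2 + q / ‖x t‖ = ‖a‖ ^ 2 := by
  have hι2 : ι ^ 2 = 1 := by rcases hι with h | h <;> simp [h]
  have hg : ∀ s ∈ I, gradient (fun y => Sgen q ι y a) (x s) = gradField q ι a (x s) :=
    fun s hs => gradient_Sgen hq ι ha (hx0 s hs) (hρ s hs)
  intro t ht
  refine ⟨hx t ht, ?_, ?_⟩
  · have h := hx t ht
    rw [hg t ht] at h
    exact (hasDerivWithinAt_gradField hq hι2 ha (hx0 t ht) (hρ t ht) h).congr hg (hg t ht)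
  · rw [hg t ht]
    exact energy_gradField hq hι2 ha (hx0 t ht) (hρ t ht)
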